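/- Let K be the field of rational functions in three variables over ℚ (the fraction field of the polynomial ring ℚ[x,y,z]), and let φ_x, φ_y, φ_z be the bijections of Kˣ × Kˣ × Kˣ given by φ_x(x,y,z) = ((xyz)^{-1}, y, z), φ_y(x,y,z) = (x, (xyz)^{-1}, z), φ_z(x,y,z) = (x, y, (xyz)^{-1}). Then the subgroup of the permutation group of Kˣ × Kˣ × Kˣ generated by φ_x, φ_y, φ_z is isomorphic to the symmetric group S_4 on four letters. -/

import Mathlib

/-!
Send `(x, y, z)` to the quadruple `(x, y, z, (xyz)⁻¹)`. This identifies `Kˣ × Kˣ × Kˣ` with the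
quadruples of units of product `1`, on which `S₄` acts by permuting the entries. Under this
identification `φ_x`, `φ_y`, `φ_z` exchange the fourth entry with the first, second and third one,
respectively, so they are the images of the transpositions `(0 3)`, `(1 3)`, `(2 3)`, which
generate `S₄`. The generated group is therefore the range of the action homomorphism `permHom`,
and `permHom` is injective because the quadruple of `(2, 3, 5)` has four distinct entries.
-/

/-- The field of rational functions in three variables over ℚ. -/
abbrev RatFuncField : Type := FractionRing (MvPolynomial (Fin 3) ℚ)

/-- The transformation `φ_x(x,y,z) = ((xyz)⁻¹, y, z)` on triples of nonzero elements. -/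
def phiX {K : Type*} [Field K] : Kˣ × Kˣ × Kˣ → Kˣ × Kˣ × Kˣ :=
  fun p => ((p.1 * p.2.1 * p.2.2)⁻¹, p.2.1, p.2.2)

/-- The transformation `φ_y(x,y,z) = (x, (xyz)⁻¹, z)` on triples of nonzero elements. -/
def phiY {K : Type*} [Field K] : Kˣ × Kˣ × Kˣ → Kˣ × Kˣ × Kˣ :=
  fun p => (p.1, (p.1 * p.2.1 * p.2.2)⁻¹, p.2.2)

/-- The transformation `φ_z(x,y,z) = (x, y, (xyz)⁻¹)` on triples of nonzero elements. -/
def phiZ {K : Type*} [Field K] : Kˣ × Kˣ × Kˣ → Kˣ × Kˣ × Kˣ :=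
  fun p => (p.1, p.2.1, (p.1 * p.2.1 * p.2.2)⁻¹)

/-- The quadruple `(x, y, z, (xyz)⁻¹)`. -/
def quad {G : Type*} [CommGroup G] (p : G × G × G) : Fin 4 → G :=
  ![p.1, p.2.1, p.2.2, (p.1 * p.2.1 * p.2.2)⁻¹]

theorem prod_quad {G : Type*} [CommGroup G] (p : G × G × G) : ∏ i, quad p i = 1 := by
  simp [quad, Fin.prod_univ_four]

/-- The triple determines the quadruple: the last entry of a quadruple of product `1` is
redundant. -/
theorem quad_eq_of_prod_eq_one {G : Type*} [CommGroup G] (v : Fin 4 → G) (hv : ∏ i, v i = 1) :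
    quad (v 0, v 1, v 2) = v := by
  rw [Fin.prod_univ_four] at hv
  funext i
  fin_cases i
  · rfl
  · rfl
  · rfl
  · exact inv_eq_of_mul_eq_one_right hv

/-- The transformation of triples induced by permuting the entries of the quadruple; the inverse of
`σ` makes this a left action. -/
def permAct {G : Type*} [CommGroup G] (σ : Equiv.Perm (Fin 4)) (p : G × G × G) : G × G × G :=
  (quad p (σ⁻¹ 0), quad p (σ⁻¹ 1), quad p (σ⁻¹ 2))

theorem quad_permAct {G : Type*} [CommGroup G] (σ : Equiv.Perm (Fin 4)) (p : G × G × G) :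
    quad (permAct σ p) = fun i => quad p (σ⁻¹ i) :=
  quad_eq_of_prod_eq_one (fun i => quad p (σ⁻¹ i))
    ((Equiv.prod_comp σ⁻¹ (quad p)).trans (prod_quad p))

/-- The action of `S₄` on triples, as a homomorphism to the group of bijections. -/
def permHom (G : Type*) [CommGroup G] : Equiv.Perm (Fin 4) →* Equiv.Perm (G × G × G) :=
  MonoidHom.toHomPerm
    { toFun := fun σ => (permAct σ : Function.End (G × G × G))
      map_one' := rfl
      map_mul' := fun σ τ => by
        funext p
        change permAct (σ * τ) p = permAct σ (permAct τ p)
        conv_rhs => rw [permAct, quad_permAct]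
        simp [permAct] }

theorem permHom_apply {G : Type*} [CommGroup G] (σ : Equiv.Perm (Fin 4)) (p : G × G × G) :
    permHom G σ p = permAct σ p := rfl

theorem permHom_injective {G : Type*} [CommGroup G] (p : G × G × G)
    (hp : Function.Injective (quad p)) : Function.Injective (permHom G) := by
  intro σ τ h
  have h1 : quad (permAct σ p) = quad (permAct τ p) := by
    rw [← permHom_apply, h, permHom_apply]
  rw [quad_permAct, quad_permAct] at h1
  exact inv_injective (Equiv.ext fun i => hp (congrFun h1 i))

/-- The three transpositions moving the last letter generate `S₄`: they connect all letters. -/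
theorem closure_swap_three :
    Subgroup.closure ({Equiv.swap 0 3, Equiv.swap 1 3, Equiv.swap 2 3} :
      Set (Equiv.Perm (Fin 4))) = ⊤ := by
  rw [eq_top_iff, ← Equiv.Perm.closure_isSwap, Subgroup.closure_le]
  rintro _ ⟨i, j, -, rfl⟩
  have key : ∀ k : Fin 4, Equiv.swap k 3 ∈ Subgroup.closure
      ({Equiv.swap 0 3, Equiv.swap 1 3, Equiv.swap 2 3} : Set (Equiv.Perm (Fin 4))) := by
    intro k
    fin_cases k
    · exact Subgroup.subset_closure (by simp)
    · exact Subgroup.subset_closure (by simp)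
    · exact Subgroup.subset_closure (by simp)
    · simp [Equiv.swap_self, ← Equiv.Perm.one_def, one_mem]
  exact SubmonoidClass.swap_mem_trans _ (key i) (Equiv.swap_comm j 3 ▸ key j)

theorem exists_injective_quad (K : Type*) [Field K] [CharZero K] :
    ∃ p : Kˣ × Kˣ × Kˣ, Function.Injective (quad p) := by
  refine ⟨(Units.mk0 2 (by norm_num), Units.mk0 3 (by norm_num), Units.mk0 5 (by norm_num)), ?_⟩
  intro i j h
  have h := congrArg Units.val h
  fin_cases i <;> fin_cases j <;> first | rfl | (exfalso; norm_num [quad] at h)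

/-- The group generated by the three bijections `φ_x`, `φ_y`, `φ_z` of
`Kˣ × Kˣ × Kˣ`, for `K = ℚ(x,y,z)`, is isomorphic to the symmetric group `S₄`. -/
theorem phi_group_iso_S4
    (ex ey ez : Equiv.Perm (RatFuncFieldˣ × RatFuncFieldˣ × RatFuncFieldˣ))
    (hx : ⇑ex = phiX) (hy : ⇑ey = phiY) (hz : ⇑ez = phiZ) :
    Nonempty ((Subgroup.closure ({ex, ey, ez} :
      Set (Equiv.Perm (RatFuncFieldˣ × RatFuncFieldˣ × RatFuncFieldˣ)))) ≃*
      Equiv.Perm (Fin 4)) := by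
  have hX : permHom RatFuncFieldˣ (Equiv.swap 0 3) = ex := by
    ext1 p; rw [hx]; rfl
  have hY : permHom RatFuncFieldˣ (Equiv.swap 1 3) = ey := by
    ext1 p; rw [hy]; rfl
  have hZ : permHom RatFuncFieldˣ (Equiv.swap 2 3) = ez := by
    ext1 p; rw [hz]; rfl
  have hrange : (permHom RatFuncFieldˣ).range = Subgroup.closure {ex, ey, ez} := by
    rw [MonoidHom.range_eq_map, ← closure_swap_three, MonoidHom.map_closure, Set.image_insert_eq,
      Set.image_pair, hX, hY, hZ]
  have : CharZero RatFuncField :=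
    charZero_of_injective_algebraMap (IsFractionRing.injective (MvPolynomial (Fin 3) ℚ) _)
  obtain ⟨p, hp⟩ := exists_injective_quad RatFuncField
  rw [← hrange]
  exact ⟨(MonoidHom.ofInjective (permHom_injective p hp)).symm⟩
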